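/- Let q be a real number with 0 < q < 1 and let x, y be nonzero complex numbers such that x·q^{10n} ≠ 1 and y·q^{10n} ≠ 1 for every integer n. Then (∑_{n∈ℤ} [x q^{10n}/(1 − x q^{10n})² − y q^{10n}/(1 − y q^{10n})²]) · f(−x, −q^{10}/x)² · f(−y, −q^{10}/y)² = x · f(−xy, −q^{10}/(xy)) · f(−y/x, −x q^{10}/y) · ((q^{10}; q^{10})∞)⁶. -/

import Mathlib

/-- Ramanujan's theta function `f(a,b) = ∑_{n ∈ ℤ} a^(n(n+1)/2) b^(n(n-1)/2)`. -/
noncomputable def ramTheta (a b : ℂ) : ℂ :=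
  ∑' n : ℤ, a ^ ((n * (n + 1)) / 2).toNat * b ^ ((n * (n - 1)) / 2).toNat

/-- `φ(q) = f(q,q)`. -/
noncomputable def phi (q : ℂ) : ℂ := ramTheta q q

/-- `ψ(q) = f(q,q³)`. -/
noncomputable def psi (q : ℂ) : ℂ := ramTheta q (q ^ 3)

/-- `(a;q)_∞ = ∏_{k=0}^∞ (1 - a q^k)`. -/
noncomputable def qPochInf (a q : ℂ) : ℂ := ∏' k : ℕ, (1 - a * q ^ k)


open Filter Topology

/-- Gaussian weight `p^(n(n-1)/2)`. -/
noncomputable def gs (p : ℝ) (n : ℤ) : ℂ := (p : ℂ) ^ (n * (n - 1) / 2)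

lemma two_mul_tri (n : ℤ) : 2 * (n * (n - 1) / 2) = n * (n - 1) := by
  have : Even (n * (n - 1)) := by
    have := Int.even_mul_succ_self (n - 1)
    rw [mul_comm] at this
    simpa using this
  exact Int.mul_ediv_cancel' this.two_dvd

lemma gs_succ {p : ℝ} (hp : 0 < p) (n : ℤ) : gs p (n + 1) = gs p n * (p : ℂ) ^ n := by
  have hp' : (p : ℂ) ≠ 0 := by exact_mod_cast hp.ne'
  unfold gs
  rw [← zpow_add₀ hp']
  congr 1
  have h1 := two_mul_tri n
  have h2 := two_mul_tri (n + 1)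
  nlinarith

lemma gs_norm_summable {p : ℝ} (hp : 0 < p) (hp1 : p < 1) (z : ℂ) (hz : z ≠ 0) (k : ℕ) :
    Summable (fun n : ℤ => ‖(n : ℂ) ^ k * (gs p n * z ^ n)‖) := by
  have hlp : Real.log p < 0 := Real.log_neg hp hp1
  have hpi := Real.pi_pos
  set T : ℝ := -Real.log p / (2 * Real.pi) with hT
  have hTp : 0 < T := by apply div_pos <;> linarith
  set c : ℝ := Real.log ‖z‖ - Real.log p / 2 with hc
  set S : ℝ := |c| / (2 * Real.pi) with hS
  refine Summable.of_nonneg_of_le (fun _ => norm_nonneg _) (fun n => ?_)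
    (summable_pow_mul_jacobiTheta₂_term_bound S hTp k)
  rw [norm_mul, norm_pow, Complex.norm_intCast]
  have hzn : 0 < ‖z‖ := norm_pos_iff.mpr hz
  have e : ‖gs p n * z ^ n‖ = Real.exp (Real.log p * (n * (n - 1) / 2) + Real.log ‖z‖ * n) := by
    rw [norm_mul, gs, norm_zpow, norm_zpow, Complex.norm_real, Real.norm_of_nonneg hp.le,
      ← Real.rpow_intCast, ← Real.rpow_intCast, Real.rpow_def_of_pos hp, Real.rpow_def_of_pos hzn,
      ← Real.exp_add]
    congr 2
    congr 1
    have := two_mul_tri n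
    have h' : (2 : ℝ) * ((n * (n - 1) / 2 : ℤ) : ℝ) = n * (n - 1) := by exact_mod_cast this
    linarith
  rw [e]
  push_cast
  gcongr
  have h1 : c * n ≤ |c| * |(n : ℝ)| := by rw [← abs_mul]; exact le_abs_self _
  have h2 : -Real.pi * (T * n ^ 2 - 2 * S * |(n : ℝ)|) = Real.log p / 2 * n ^ 2 + |c| * |(n : ℝ)| := by
    rw [hT, hS]; field_simp; ring
  rw [h2]
  have h3 : Real.log p * (n * (n - 1) / 2) + Real.log ‖z‖ * n = Real.log p / 2 * n ^ 2 + c * n := by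
    rw [hc]; ring
  linarith

lemma gs_summable {p : ℝ} (hp : 0 < p) (hp1 : p < 1) (z : ℂ) (hz : z ≠ 0) (k : ℕ) :
    Summable (fun n : ℤ => (n : ℂ) ^ k * (gs p n * z ^ n)) :=
  (gs_norm_summable hp hp1 z hz k).of_norm

/-- Moments of the theta series. -/
noncomputable def th (p : ℝ) (k : ℕ) (x : ℂ) : ℂ := ∑' n : ℤ, (n : ℂ) ^ k * (gs p n * (-x) ^ n)

lemma ramTheta_eq {p : ℝ} (hp : 0 < p) (x : ℂ) (hx : x ≠ 0) :
    ramTheta (-x) (-((p : ℂ) / x)) = th p 0 x := by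
  have hp' : (p : ℂ) ≠ 0 := by exact_mod_cast hp.ne'
  unfold ramTheta th
  congr 1
  ext n
  have h1 := two_mul_tri n
  have h2 := two_mul_tri (n + 1)
  have h3 : n * (n + 1) / 2 = n * (n - 1) / 2 + n := by
    have : (n + 1) * (n + 1 - 1) = n * (n + 1) := by ring
    rw [this] at h2
    nlinarith
  have hn1 : 0 ≤ n * (n - 1) / 2 := by
    have : 0 ≤ n * (n - 1) := by
      rcases le_or_gt n 0 with h | h <;> nlinarith
    omega
  have hn2 : 0 ≤ n * (n + 1) / 2 := by
    have : 0 ≤ n * (n + 1) := by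
      rcases lt_or_ge n 0 with h | h <;> nlinarith
    omega
  rw [← zpow_natCast, ← zpow_natCast, Int.toNat_of_nonneg hn1, Int.toNat_of_nonneg hn2, h3]
  have hx' : -x ≠ 0 := neg_ne_zero.mpr hx
  have : -((p : ℂ) / x) = p * (-x)⁻¹ := by rw [inv_neg]; ring
  rw [this, mul_zpow, inv_zpow, zpow_add₀ hx', gs]
  have := zpow_ne_zero (n * (n - 1) / 2) hx'
  field_simp

/-- finite q-factorial -/
noncomputable def poch (p : ℝ) (N : ℕ) : ℝ := ∏ i ∈ Finset.range N, (1 - p ^ (i + 1))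

noncomputable def pinf (p : ℝ) : ℝ := ∏' i : ℕ, (1 - p ^ (i + 1))

lemma poch_pos {p : ℝ} (hp : 0 < p) (hp1 : p < 1) (N : ℕ) : 0 < poch p N :=
  Finset.prod_pos fun i _ => sub_pos.mpr (pow_lt_one₀ hp.le hp1 (by omega))

lemma poch_succ (p : ℝ) (N : ℕ) : poch p (N + 1) = poch p N * (1 - p ^ (N + 1)) :=
  Finset.prod_range_succ _ _

lemma poch_anti {p : ℝ} (hp : 0 < p) (hp1 : p < 1) : Antitone (poch p) := by
  refine antitone_nat_of_succ_le fun N => ?_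
  rw [poch_succ]
  have := poch_pos hp hp1 N
  have : 0 < p ^ (N + 1) := by positivity
  nlinarith

lemma poch_le_one {p : ℝ} (hp : 0 < p) (hp1 : p < 1) (N : ℕ) : poch p N ≤ 1 := by
  simpa [poch] using poch_anti hp hp1 (Nat.zero_le N)

lemma summ_p {p : ℝ} (hp : 0 < p) (hp1 : p < 1) : Summable fun i : ℕ => p ^ (i + 1) :=
  (summable_nat_add_iff 1).mpr (summable_geometric_of_lt_one hp.le hp1)

lemma poch_tendsto {p : ℝ} (hp : 0 < p) (hp1 : p < 1) :
    Tendsto (poch p) atTop (𝓝 (pinf p)) := by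
  have : Multipliable fun i : ℕ => (1 - p ^ (i + 1)) := by
    apply multipliable_one_add_of_summable (f := fun n ↦ -p ^ (n + 1))
    simpa [abs_of_pos hp] using summ_p hp hp1
  exact this.hasProd.tendsto_prod_nat

lemma pinf_pos {p : ℝ} (hp : 0 < p) (hp1 : p < 1) : 0 < pinf p := by
  have h0 : 0 ≤ pinf p := ge_of_tendsto' (poch_tendsto hp hp1) fun N => (poch_pos hp hp1 N).le
  refine lt_of_le_of_ne h0 (Ne.symm ?_)
  refine tprod_one_add_ne_zero_of_summable (f := fun n ↦ -p ^ (n + 1)) ?_ ?_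
  · intro i
    have : p ^ (i + 1) < 1 := pow_lt_one₀ hp.le hp1 (by omega)
    intro h
    linarith
  · simpa [abs_of_pos hp] using summ_p hp hp1

lemma pinf_le_poch {p : ℝ} (hp : 0 < p) (hp1 : p < 1) (N : ℕ) : pinf p ≤ poch p N :=
  (poch_anti hp hp1).le_of_tendsto (poch_tendsto hp hp1) N

lemma qPochInf_eq {p : ℝ} (hp : 0 < p) (hp1 : p < 1) : qPochInf (p : ℂ) (p : ℂ) = pinf p := by
  have hm : Multipliable fun i : ℕ => (1 - (p : ℂ) ^ (i + 1)) := by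
    apply multipliable_one_add_of_summable (f := fun n ↦ -(p : ℂ) ^ (n + 1))
    simpa [abs_of_pos hp] using summ_p hp hp1
  have h1 := hm.hasProd.tendsto_prod_nat
  have h2 := (Complex.continuous_ofReal.tendsto _).comp (poch_tendsto hp hp1)
  have h3 : (fun n : ℕ => ∏ i ∈ Finset.range n, (1 - (p : ℂ) ^ (i + 1))) =
      (fun x : ℝ => (x : ℂ)) ∘ poch p := by
    ext n; simp [poch]
  rw [h3] at h1
  rw [← tendsto_nhds_unique h1 h2, qPochInf]
  congr 1
  ext i
  ring

/-- reciprocal q-factorial extended by zero -/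
noncomputable def rr (p : ℝ) (k : ℤ) : ℝ := if k < 0 then 0 else 1 / poch p k.toNat

lemma rr_rec {p : ℝ} (hp : 0 < p) (hp1 : p < 1) (k : ℤ) : rr p (k - 1) = (1 - p ^ k) * rr p k := by
  rcases lt_trichotomy k 0 with h | h | h
  · simp [rr, h, show k - 1 < 0 by omega]
  · subst h; simp [rr]
  · obtain ⟨m, rfl⟩ : ∃ m : ℕ, k = m + 1 := ⟨(k - 1).toNat, by omega⟩
    have h1 : ¬ ((m : ℤ) + 1 < 0) := by omega
    have h2 : ¬ ((m : ℤ) < 0) := by omega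
    have h3 : ((m : ℤ) + 1).toNat = m + 1 := by omega
    simp only [rr, h1, add_sub_cancel_right, h2, if_false, h3, Int.toNat_natCast]
    have a := poch_pos hp hp1 m
    have b := poch_pos hp hp1 (m + 1)
    have c : p ^ ((m : ℤ) + 1) = p ^ (m + 1) := by exact_mod_cast zpow_natCast p (m + 1)
    rw [c]
    rw [poch_succ] at b ⊢
    have := (mul_pos_iff_of_pos_left a).mp b
    field_simp

lemma rr_nonneg {p : ℝ} (hp : 0 < p) (hp1 : p < 1) (k : ℤ) : 0 ≤ rr p k := by
  unfold rr
  split_ifs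
  · rfl
  · exact (one_div_pos.mpr (poch_pos hp hp1 _)).le

lemma rr_le {p : ℝ} (hp : 0 < p) (hp1 : p < 1) (k : ℤ) : rr p k ≤ 1 / pinf p := by
  unfold rr
  have := pinf_pos hp hp1
  split_ifs
  · positivity
  · exact one_div_le_one_div_of_le this (pinf_le_poch hp hp1 _)

lemma rr_tendsto {p : ℝ} (hp : 0 < p) (hp1 : p < 1) :
    Tendsto (rr p) atTop (𝓝 (1 / pinf p)) := by
  have h1 : Tendsto (fun k : ℤ => 1 / poch p k.toNat) atTop (𝓝 (1 / pinf p)) := by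
    refine Tendsto.div tendsto_const_nhds ?_ (pinf_pos hp hp1).ne'
    refine (poch_tendsto hp hp1).comp ?_
    refine tendsto_atTop.mpr fun b => ?_
    filter_upwards [eventually_ge_atTop (b : ℤ)] with k hk
    omega
  refine h1.congr' ?_
  filter_upwards [eventually_ge_atTop (0 : ℤ)] with k hk
  simp [rr, not_lt.mpr hk]

/-- central q-binomial -/
noncomputable def ww (p : ℝ) (N : ℕ) (n : ℤ) : ℝ := poch p (2 * N) * rr p (N + n) * rr p (N - n)

lemma ww_bound {p : ℝ} (hp : 0 < p) (hp1 : p < 1) (N : ℕ) (n : ℤ) :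
    |ww p N n| ≤ (1 / pinf p) * (1 / pinf p) := by
  have h1 := rr_nonneg hp hp1
  have h2 := rr_le hp hp1
  have h3 := poch_pos hp hp1 (2 * N)
  have h4 := pinf_pos hp hp1
  rw [ww, abs_of_nonneg (mul_nonneg (mul_nonneg h3.le (h1 _)) (h1 _))]
  have h5 : poch p (2 * N) * rr p (N + n) ≤ 1 * (1 / pinf p) :=
    mul_le_mul (poch_le_one hp hp1 _) (h2 _) (h1 _) zero_le_one
  rw [one_mul] at h5
  exact mul_le_mul h5 (h2 _) (h1 _) (by positivity)

lemma ww_tendsto {p : ℝ} (hp : 0 < p) (hp1 : p < 1) (n : ℤ) :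
    Tendsto (fun N : ℕ => ww p N n) atTop (𝓝 (1 / pinf p)) := by
  have h4 := pinf_pos hp hp1
  have e : 1 / pinf p = pinf p * (1 / pinf p) * (1 / pinf p) := by field_simp
  rw [e]
  refine Tendsto.mul (Tendsto.mul ?_ ?_) ?_
  · refine (poch_tendsto hp hp1).comp ?_
    exact tendsto_atTop_mono (fun n => by simp only [id]; omega) tendsto_id
  · refine (rr_tendsto hp hp1).comp ?_
    exact tendsto_atTop_add_const_right _ _ tendsto_natCast_atTop_atTop
  · refine (rr_tendsto hp hp1).comp ?_
    simp only [sub_eq_add_neg]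
    exact tendsto_atTop_add_const_right _ _ tendsto_natCast_atTop_atTop

lemma ww_rec {p : ℝ} (hp : 0 < p) (hp1 : p < 1) (N : ℕ) (n : ℤ) :
    ww p (N + 1) n = (1 + p ^ (2 * N + 1)) * ww p N n
      + p ^ ((N : ℤ) + 1 - n) * ww p N (n - 1) + p ^ ((N : ℤ) + 1 + n) * ww p N (n + 1) := by
  have hp0 := hp.ne'
  have e2 : 2 * (N + 1) = 2 * N + 1 + 1 := by ring
  unfold ww
  rw [e2, poch_succ, poch_succ]
  push_cast
  have a1 := rr_rec hp hp1 ((N : ℤ) + 1 + n)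
  have a2 := rr_rec hp hp1 ((N : ℤ) + 1 + n - 1)
  have b1 := rr_rec hp hp1 ((N : ℤ) + 1 - n)
  have b2 := rr_rec hp hp1 ((N : ℤ) + 1 - n - 1)
  have hA : p ^ ((N : ℤ) + 1 + n - 1) = p ^ ((N : ℤ) + 1 + n) / p := by
    rw [zpow_sub₀ hp0]; simp
  have hB : p ^ ((N : ℤ) + 1 - n - 1) = p ^ ((N : ℤ) + 1 - n) / p := by
    rw [zpow_sub₀ hp0 _ 1]; simp
  have hAB : p ^ ((N : ℤ) + 1 + n) * p ^ ((N : ℤ) + 1 - n) = p ^ (2 * N + 1 + 1) := by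
    rw [← zpow_add₀ hp0, ← zpow_natCast]; congr 1; push_cast; ring
  have hAB' : p ^ (2 * N + 1) = p ^ ((N : ℤ) + 1 + n) * p ^ ((N : ℤ) + 1 - n) / p := by
    rw [hAB]; field_simp; ring
  rw [hAB', ← hAB]
  rw [hA] at a2
  rw [hB] at b2
  rw [a1] at a2
  rw [b1] at b2
  have c1 : (N : ℤ) + n = N + 1 + n - 1 := by ring
  have c2 : (N : ℤ) - n = N + 1 - n - 1 := by ring
  have c3 : (N : ℤ) + (n - 1) = N + 1 + n - 1 - 1 := by ring
  have c4 : (N : ℤ) - (n - 1) = N + 1 - n := by ring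
  have c5 : (N : ℤ) + (n + 1) = N + 1 + n := by ring
  have c6 : (N : ℤ) - (n + 1) = N + 1 - n - 1 - 1 := by ring
  rw [c1, c2, c3, c4, c5, c6, a2, b2, a1, b1]
  generalize p ^ ((N : ℤ) + 1 + n) = A
  generalize p ^ ((N : ℤ) + 1 - n) = B
  field_simp
  ring

lemma hasSum_congr_iff {f g : ℤ → ℂ} {a : ℂ} (h : ∀ n, f n = g n) : HasSum f a ↔ HasSum g a := by
  rw [funext h]

lemma HasSum.congr_val {f : ℤ → ℂ} {a b : ℂ} (h : HasSum f a) (e : a = b) : HasSum f b := e ▸ h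

/-- coefficients of the finite theta product -/
noncomputable def cc (p : ℝ) (x : ℂ) (N : ℕ) (n : ℤ) : ℂ := gs p n * (-x) ^ n * (ww p N n : ℂ)

lemma cc_rec {p : ℝ} (hp : 0 < p) (hp1 : p < 1) {x : ℂ} (hx : x ≠ 0) (N : ℕ) (n : ℤ) :
    cc p x (N + 1) n = (1 + (p : ℂ) ^ (2 * N + 1)) * cc p x N n
      - x * (p : ℂ) ^ N * cc p x N (n - 1) - (p : ℂ) ^ (N + 1) / x * cc p x N (n + 1) := by
  have hp' : (p : ℂ) ≠ 0 := by exact_mod_cast hp.ne'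
  have hx' : -x ≠ 0 := neg_ne_zero.mpr hx
  have g1 := gs_succ hp n
  have g2 := gs_succ hp (n - 1)
  rw [sub_add_cancel] at g2
  have z1 : (-x) ^ (n + 1) = (-x) ^ n * (-x) := zpow_add_one₀ hx' n
  have z2 : (-x) ^ n = (-x) ^ (n - 1) * (-x) := by rw [← zpow_add_one₀ hx']; simp
  unfold cc
  rw [ww_rec hp hp1]
  push_cast
  have e1 : (p : ℂ) ^ ((N : ℤ) + 1 - n) * (p : ℂ) ^ (n - 1) = (p : ℂ) ^ N := by
    rw [← zpow_add₀ hp', ← zpow_natCast]; congr 1; ring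
  have e2 : (p : ℂ) ^ ((N : ℤ) + 1 + n) = (p : ℂ) ^ (N + 1) * (p : ℂ) ^ n := by
    rw [zpow_add₀ hp']; congr 1
  rw [g1, z1, e2, ← e1]
  have k1 : gs p n * (-x) ^ n * ((p : ℂ) ^ ((N : ℤ) + 1 - n) * (ww p N (n - 1) : ℂ)) =
      - (x * ((p : ℂ) ^ ((N : ℤ) + 1 - n) * (p : ℂ) ^ (n - 1)) *
        (gs p (n - 1) * (-x) ^ (n - 1) * (ww p N (n - 1) : ℂ))) := by
    rw [g2, z2]; ring
  have k2 : (p : ℂ) ^ (N + 1) / x * (gs p n * (p : ℂ) ^ n * ((-x) ^ n * (-x)) * (ww p N (n + 1) : ℂ))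
     = - (gs p n * (-x) ^ n * ((p : ℂ) ^ (N + 1) * (p : ℂ) ^ n * (ww p N (n + 1) : ℂ))) := by
    field_simp
  rw [k2]
  linear_combination k1

/-- local factor -/
noncomputable def lf (p : ℝ) (x : ℂ) (N : ℕ) : ℂ := (1 - x * (p : ℂ) ^ N) * (1 - (p : ℂ) ^ (N + 1) / x)

noncomputable def lf1 (p : ℝ) (x : ℂ) (N : ℕ) : ℂ := - (x * (p : ℂ) ^ N) + (p : ℂ) ^ (N + 1) / x

noncomputable def lf2 (p : ℝ) (x : ℂ) (N : ℕ) : ℂ := - (x * (p : ℂ) ^ N) - (p : ℂ) ^ (N + 1) / x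

noncomputable def E0 (p : ℝ) (x : ℂ) : ℕ → ℂ
  | 0 => 1
  | N + 1 => E0 p x N * lf p x N

noncomputable def E1 (p : ℝ) (x : ℂ) : ℕ → ℂ
  | 0 => 0
  | N + 1 => E1 p x N * lf p x N + E0 p x N * lf1 p x N

noncomputable def E2 (p : ℝ) (x : ℂ) : ℕ → ℂ
  | 0 => 0
  | N + 1 => E2 p x N * lf p x N + 2 * E1 p x N * lf1 p x N + E0 p x N * lf2 p x N

lemma lf_eq {p : ℝ} {x : ℂ} (hx : x ≠ 0) (N : ℕ) :
    lf p x N = 1 + (p : ℂ) ^ (2 * N + 1) - x * (p : ℂ) ^ N - (p : ℂ) ^ (N + 1) / x := by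
  unfold lf
  field_simp
  ring

lemma cc_zero (p : ℝ) (x : ℂ) (n : ℤ) (hn : n ≠ 0) : cc p x 0 n = 0 := by
  unfold cc ww rr
  rcases lt_or_gt_of_ne hn with h | h
  · simp [h]
  · simp [h]

lemma cc_zero_zero (p : ℝ) (x : ℂ) : cc p x 0 0 = 1 := by
  simp [cc, ww, rr, gs, poch]

lemma hasSum_cc {p : ℝ} (hp : 0 < p) (hp1 : p < 1) {x : ℂ} (hx : x ≠ 0) (N : ℕ) :
    HasSum (fun n : ℤ => cc p x N n) (E0 p x N) ∧
    HasSum (fun n : ℤ => (n : ℂ) * cc p x N n) (E1 p x N) ∧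
    HasSum (fun n : ℤ => (n : ℂ) ^ 2 * cc p x N n) (E2 p x N) := by
  induction N with
  | zero =>
    refine ⟨?_, ?_, ?_⟩
    · convert hasSum_single (f := fun n : ℤ => cc p x 0 n) 0 (fun n hn => cc_zero p x n hn) using 1
      simp [cc_zero_zero, E0]
    · convert hasSum_single (f := fun n : ℤ => (n : ℂ) * cc p x 0 n) 0
        (fun n hn => by rw [cc_zero p x n hn, mul_zero]) using 1
      simp [E1]
    · convert hasSum_single (f := fun n : ℤ => (n : ℂ) ^ 2 * cc p x 0 n) 0
        (fun n hn => by rw [cc_zero p x n hn, mul_zero]) using 1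
      simp [E2]
  | succ N ih =>
    obtain ⟨h0, h1, h2⟩ := ih
    have sm : ∀ {f : ℤ → ℂ} {a : ℂ}, HasSum f a → HasSum (fun n => f (n - 1)) a := by
      intro f a h
      exact (Equiv.hasSum_iff (Equiv.subRight (1 : ℤ))).mpr h
    have sp : ∀ {f : ℤ → ℂ} {a : ℂ}, HasSum f a → HasSum (fun n => f (n + 1)) a := by
      intro f a h
      exact (Equiv.hasSum_iff (Equiv.addRight (1 : ℤ))).mpr h
    have m0 := sm h0
    have m1 := sm h1
    have m2 := sm h2
    have p0 := sp h0
    have p1 := sp h1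
    have p2 := sp h2
    refine ⟨?_, ?_, ?_⟩
    · have h := ((h0.mul_left (1 + (p : ℂ) ^ (2 * N + 1))).sub (m0.mul_left (x * (p : ℂ) ^ N))).sub
        (p0.mul_left ((p : ℂ) ^ (N + 1) / x))
      refine (hasSum_congr_iff fun n => cc_rec hp hp1 hx N n).mpr ?_
      refine HasSum.congr_val h ?_
      rw [E0, lf_eq hx]
      ring
    · have h := ((h1.mul_left (1 + (p : ℂ) ^ (2 * N + 1))).sub
        ((m1.add m0).mul_left (x * (p : ℂ) ^ N))).sub
        ((p1.sub p0).mul_left ((p : ℂ) ^ (N + 1) / x))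
      refine (hasSum_congr_iff fun n => ?_).mpr (HasSum.congr_val h ?_)
      · rw [cc_rec hp hp1 hx N n]
        push_cast
        ring
      · rw [E1, lf_eq hx, lf1]
        ring
    · have h := ((h2.mul_left (1 + (p : ℂ) ^ (2 * N + 1))).sub
        (((m2.add (m1.mul_left 2)).add m0).mul_left (x * (p : ℂ) ^ N))).sub
        (((p2.sub (p1.mul_left 2)).add p0).mul_left ((p : ℂ) ^ (N + 1) / x))
      refine (hasSum_congr_iff fun n => ?_).mpr (HasSum.congr_val h ?_)
      · rw [cc_rec hp hp1 hx N n]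
        push_cast
        ring
      · rw [E2, lf_eq hx, lf1, lf2]
        ring

lemma tendsto_moment {p : ℝ} (hp : 0 < p) (hp1 : p < 1) {x : ℂ} (hx : x ≠ 0) (k : ℕ) :
    Tendsto (fun N : ℕ => ∑' n : ℤ, (n : ℂ) ^ k * cc p x N n) atTop
      (𝓝 (th p k x * (1 / pinf p : ℝ))) := by
  unfold th
  rw [← tsum_mul_right]
  have hx' : -x ≠ 0 := neg_ne_zero.mpr hx
  refine tendsto_tsum_of_dominated_convergence
    (bound := fun n : ℤ => ‖(n : ℂ) ^ k * (gs p n * (-x) ^ n)‖ * ((1 / pinf p) * (1 / pinf p)))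
    ((gs_norm_summable hp hp1 (-x) hx' k).mul_right _) ?_ ?_
  · intro n
    have := (Complex.continuous_ofReal.tendsto _).comp (ww_tendsto hp hp1 n)
    refine (this.const_mul ((n : ℂ) ^ k * (gs p n * (-x) ^ n))).congr fun N => ?_
    simp only [cc, Function.comp]
    ring
  · refine Eventually.of_forall fun N n => ?_
    have : (n : ℂ) ^ k * cc p x N n = ((n : ℂ) ^ k * (gs p n * (-x) ^ n)) * (ww p N n : ℂ) := by
      rw [cc]; ring
    rw [this, norm_mul, Complex.norm_real]
    exact mul_le_mul_of_nonneg_left (ww_bound hp hp1 N n) (norm_nonneg _)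

lemma tendsto_E0 {p : ℝ} (hp : 0 < p) (hp1 : p < 1) {x : ℂ} (hx : x ≠ 0) :
    Tendsto (E0 p x) atTop (𝓝 (th p 0 x * (1 / pinf p : ℝ))) := by
  refine (tendsto_moment hp hp1 hx 0).congr fun N => ?_
  simpa using (hasSum_cc hp hp1 hx N).1.tsum_eq

lemma tendsto_E1 {p : ℝ} (hp : 0 < p) (hp1 : p < 1) {x : ℂ} (hx : x ≠ 0) :
    Tendsto (E1 p x) atTop (𝓝 (th p 1 x * (1 / pinf p : ℝ))) := by
  refine (tendsto_moment hp hp1 hx 1).congr fun N => ?_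
  simpa using (hasSum_cc hp hp1 hx N).2.1.tsum_eq

lemma tendsto_E2 {p : ℝ} (hp : 0 < p) (hp1 : p < 1) {x : ℂ} (hx : x ≠ 0) :
    Tendsto (E2 p x) atTop (𝓝 (th p 2 x * (1 / pinf p : ℝ))) := by
  refine (tendsto_moment hp hp1 hx 2).congr fun N => ?_
  exact (hasSum_cc hp hp1 hx N).2.2.tsum_eq

lemma E0_one (p : ℝ) (N : ℕ) : E0 p 1 (N + 1) = 0 := by
  induction N with
  | zero => simp [E0, lf]
  | succ N ih => rw [E0, ih, zero_mul]

lemma E1_one (p : ℝ) (N : ℕ) : E1 p 1 (N + 1) = - ((poch p N * poch p (N + 1) : ℝ) : ℂ) := by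
  induction N with
  | zero => simp [E1, E0, lf, lf1, poch]; ring
  | succ N ih =>
    rw [E1, ih, E0_one, lf, poch_succ p (N + 1), poch_succ p N]
    push_cast
    ring

lemma th_zero_one {p : ℝ} (hp : 0 < p) (hp1 : p < 1) : th p 0 1 = 0 := by
  have h := (tendsto_E0 hp hp1 one_ne_zero).comp (tendsto_add_atTop_nat 1)
  have h2 : (E0 p 1 ∘ fun a => a + 1) = fun _ => 0 := by
    ext N; exact E0_one p N
  rw [h2] at h
  have h3 := tendsto_nhds_unique h tendsto_const_nhds
  have h4 : ((1 / pinf p : ℝ) : ℂ) ≠ 0 := by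
    have := pinf_pos hp hp1
    exact_mod_cast (one_div_pos.mpr this).ne'
  exact (mul_eq_zero.mp h3).resolve_right h4

lemma th_one_one {p : ℝ} (hp : 0 < p) (hp1 : p < 1) : th p 1 1 = - (pinf p : ℂ) ^ 3 := by
  have h := (tendsto_E1 hp hp1 one_ne_zero).comp (tendsto_add_atTop_nat 1)
  have h2 : (E1 p 1 ∘ fun a => a + 1) = fun N => - ((poch p N * poch p (N + 1) : ℝ) : ℂ) := by
    ext N; exact E1_one p N
  rw [h2] at h
  have ht := poch_tendsto hp hp1
  have h5 := ((Complex.continuous_ofReal.tendsto _).comp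
    (ht.mul (ht.comp (tendsto_add_atTop_nat 1)))).neg
  have h3 := tendsto_nhds_unique h h5
  have h4 : (pinf p : ℂ) ≠ 0 := by
    exact_mod_cast (pinf_pos hp hp1).ne'
  push_cast at h3
  field_simp at h3
  rw [h3]

/-- The summand. -/
noncomputable def gg (p : ℝ) (x : ℂ) (n : ℤ) : ℂ := x * (p : ℂ) ^ n / (1 - x * (p : ℂ) ^ n) ^ 2

lemma finite_id {p : ℝ} (hp : 0 < p) {x : ℂ} (hx : x ≠ 0)
    (hxn : ∀ n : ℤ, x * (p : ℂ) ^ n ≠ 1) (N : ℕ) :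
    E1 p x N ^ 2 - E0 p x N * E2 p x N = E0 p x N ^ 2 *
      (∑ k ∈ Finset.range N, gg p x k + ∑ k ∈ Finset.range N, gg p x (-(k + 1 : ℤ))) := by
  have hp' : (p : ℂ) ≠ 0 := by exact_mod_cast hp.ne'
  induction N with
  | zero => simp [E1, E2]
  | succ N ih =>
    rw [Finset.sum_range_succ, Finset.sum_range_succ]
    have key : lf1 p x N ^ 2 - lf p x N * lf2 p x N =
        lf p x N ^ 2 * (gg p x N + gg p x (-(N + 1 : ℤ))) := by
      have a1 := hxn N
      have a2 := hxn (-(N + 1 : ℤ))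
      unfold gg lf lf1 lf2
      have e : (p : ℂ) ^ (-(N + 1 : ℤ)) = ((p : ℂ) ^ (N + 1))⁻¹ := by
        rw [zpow_neg]; congr 1
      rw [e] at a2 ⊢
      rw [zpow_natCast] at a1 ⊢
      have hb : (p : ℂ) ^ (N + 1) ≠ 0 := pow_ne_zero _ hp'
      generalize (p : ℂ) ^ (N + 1) = b at *
      generalize (p : ℂ) ^ N = a at *
      have c1 : 1 - x * a ≠ 0 := sub_ne_zero.mpr (Ne.symm a1)
      have c2 : b - x ≠ 0 := by
        intro h
        apply a2
        rw [sub_eq_zero.mp h]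
        field_simp
      have c3 : x * b⁻¹ / (1 - x * b⁻¹) ^ 2 = x * b / (b - x) ^ 2 := by
        have : 1 - x * b⁻¹ = (b - x) / b := by field_simp
        rw [this]; field_simp
      rw [c3]
      field_simp
      ring
    rw [E0, E1, E2]
    linear_combination (lf p x N) ^ 2 * ih + E0 p x N ^ 2 * key

lemma gg_summable_nat {p : ℝ} (hp : 0 < p) (hp1 : p < 1) (c : ℂ) :
    Summable (fun k : ℕ => c * (p : ℂ) ^ k / (1 - c * (p : ℂ) ^ k) ^ 2) := by
  have hs : Summable fun k : ℕ => (4 * ‖c‖) * p ^ k :=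
    (summable_geometric_of_lt_one hp.le hp1).mul_left _
  refine Summable.of_norm_bounded_eventually_nat hs ?_
  have ht : Tendsto (fun k : ℕ => ‖c‖ * p ^ k) atTop (𝓝 (‖c‖ * 0)) :=
    (tendsto_pow_atTop_nhds_zero_of_lt_one hp.le hp1).const_mul _
  rw [mul_zero] at ht
  filter_upwards [ht.eventually (gt_mem_nhds (show (0 : ℝ) < 1 / 2 by norm_num))] with k hk
  have e : ‖c * (p : ℂ) ^ k‖ = ‖c‖ * p ^ k := by
    rw [norm_mul, norm_pow, Complex.norm_real, Real.norm_of_nonneg hp.le]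
  rw [norm_div, norm_pow, e]
  have h1 : 1 / 2 ≤ ‖1 - c * (p : ℂ) ^ k‖ := by
    have := norm_sub_norm_le (1 : ℂ) (c * (p : ℂ) ^ k)
    rw [norm_one, e] at this
    linarith
  have h2 : 1 / 4 ≤ ‖1 - c * (p : ℂ) ^ k‖ ^ 2 := by nlinarith
  rw [div_le_iff₀ (by linarith)]
  have : 0 ≤ ‖c‖ * p ^ k := by positivity
  nlinarith

lemma gg_neg {p : ℝ} (hp : 0 < p) {x : ℂ} (hx : x ≠ 0) (k : ℕ) :
    gg p x (-(k + 1 : ℤ)) = (p / x) * (p : ℂ) ^ k / (1 - (p / x) * (p : ℂ) ^ k) ^ 2 := by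
  have hp' : (p : ℂ) ≠ 0 := by exact_mod_cast hp.ne'
  unfold gg
  have e : (p : ℂ) ^ (-(k + 1 : ℤ)) = ((p : ℂ) ^ (k + 1))⁻¹ := by
    rw [zpow_neg]; congr 1
  have e2 : (p : ℂ) / x * (p : ℂ) ^ k = (p : ℂ) ^ (k + 1) / x := by rw [pow_succ]; ring
  rw [e, e2]
  have hb : (p : ℂ) ^ (k + 1) ≠ 0 := pow_ne_zero _ hp'
  generalize (p : ℂ) ^ (k + 1) = b at *
  have t1 : 1 - x * b⁻¹ = (b - x) / b := by field_simp
  have t2 : 1 - b / x = - (b - x) / x := by field_simp; ring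
  rw [t1, t2]
  rcases eq_or_ne (b - x) 0 with h | h
  · simp [h]
  · field_simp

lemma gg_parts {p : ℝ} (hp : 0 < p) (hp1 : p < 1) {x : ℂ} (hx : x ≠ 0) :
    Summable (fun k : ℕ => gg p x k) ∧ Summable (fun k : ℕ => gg p x (-(k + 1 : ℤ))) := by
  constructor
  · simpa [gg] using gg_summable_nat hp hp1 x
  · simp only [gg_neg hp hx]
    exact gg_summable_nat hp hp1 (p / x)

lemma theta_P {p : ℝ} (hp : 0 < p) (hp1 : p < 1) {x : ℂ} (hx : x ≠ 0)
    (hxn : ∀ n : ℤ, x * (p : ℂ) ^ n ≠ 1) :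
    th p 1 x ^ 2 - th p 0 x * th p 2 x = th p 0 x ^ 2 * ∑' n : ℤ, gg p x n := by
  obtain ⟨s1, s2⟩ := gg_parts hp hp1 hx
  rw [tsum_of_nat_of_neg_add_one s1 s2]
  have hP := s1.hasSum.tendsto_sum_nat.add s2.hasSum.tendsto_sum_nat
  have t0 := tendsto_E0 hp hp1 hx
  have t1 := tendsto_E1 hp hp1 hx
  have t2 := tendsto_E2 hp hp1 hx
  have l1 := (t1.pow 2).sub (t0.mul t2)
  have l2 := (t0.pow 2).mul hP
  have h := tendsto_nhds_unique (l1.congr fun N => finite_id hp hx hxn N) l2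
  have h4 : ((1 / pinf p : ℝ) : ℂ) ≠ 0 := by
    have := pinf_pos hp hp1
    exact_mod_cast (one_div_pos.mpr this).ne'
  refine mul_left_cancel₀ (pow_ne_zero 2 h4) ?_
  linear_combination h

/-- Splitting pairs of integers by parity of `m - n`. -/
def parEquiv : (ℤ × ℤ) ⊕ (ℤ × ℤ) ≃ ℤ × ℤ where
  toFun := Sum.elim (fun a => (a.1 + a.2, a.1 - a.2)) (fun a => (a.1 + a.2, a.1 - a.2 + 1))
  invFun m := if (m.1 + m.2) % 2 = 0 then Sum.inl ((m.1 + m.2) / 2, (m.1 - m.2) / 2)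
    else Sum.inr ((m.1 + m.2) / 2, (m.1 - m.2 + 1) / 2)
  left_inv := by
    rintro (⟨a, b⟩ | ⟨a, b⟩)
    · have h : (a + b + (a - b)) % 2 = 0 := by omega
      simp only [Sum.elim_inl, h, if_true]
      congr 2 <;> omega
    · have h : ¬ (a + b + (a - b + 1)) % 2 = 0 := by omega
      simp only [Sum.elim_inr, h, if_false]
      congr 2 <;> omega
  right_inv := by
    rintro ⟨m, n⟩
    by_cases h : (m + n) % 2 = 0
    · simp only [h, if_true, Sum.elim_inl]
      congr 1 <;> omega
    · simp only [h, if_false, Sum.elim_inr]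
      congr 1 <;> omega

lemma tsum_parity {F : ℤ × ℤ → ℂ} (hF : Summable F) :
    ∑' m, F m = ∑' a : ℤ × ℤ, F (a.1 + a.2, a.1 - a.2) +
      ∑' a : ℤ × ℤ, F (a.1 + a.2, a.1 - a.2 + 1) := by
  rw [← parEquiv.tsum_eq]
  have hF' : Summable (F ∘ parEquiv) := (Equiv.summable_iff parEquiv).mpr hF
  exact Summable.tsum_sum (f := F ∘ parEquiv)
    (hF'.comp_injective Sum.inl_injective) (hF'.comp_injective Sum.inr_injective)

/-- double theta splitting -/
lemma tsum_mul_parity {f g u v u' v' : ℤ → ℂ} (hf : Summable fun n => ‖f n‖)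
    (hg : Summable fun n => ‖g n‖) (hu : Summable fun n => ‖u n‖) (hv : Summable fun n => ‖v n‖)
    (hu' : Summable fun n => ‖u' n‖) (hv' : Summable fun n => ‖v' n‖)
    (h1 : ∀ a b, f (a + b) * g (a - b) = u a * v b)
    (h2 : ∀ a b, f (a + b) * g (a - b + 1) = u' a * v' b) :
    (∑' n, f n) * (∑' n, g n) = (∑' n, u n) * (∑' n, v n) + (∑' n, u' n) * (∑' n, v' n) := by
  rw [tsum_mul_tsum_of_summable_norm hf hg, tsum_mul_tsum_of_summable_norm hu hv,
    tsum_mul_tsum_of_summable_norm hu' hv',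
    tsum_parity (summable_mul_of_summable_norm hf hg)]
  simp only [h1, h2]

lemma gs_sq {p : ℝ} (n : ℤ) : gs (p ^ 2) n = (p : ℂ) ^ (n * (n - 1)) := by
  unfold gs
  push_cast
  conv_rhs => rw [← two_mul_tri n, zpow_mul]
  rfl

lemma gs_even {p : ℝ} (hp : 0 < p) (a b : ℤ) :
    gs p (a + b) * gs p (a - b) = gs (p ^ 2) a * gs (p ^ 2) b * (p : ℂ) ^ b := by
  have hp' : (p : ℂ) ≠ 0 := by exact_mod_cast hp.ne'
  rw [gs_sq, gs_sq, gs, gs, ← zpow_add₀ hp', ← zpow_add₀ hp', ← zpow_add₀ hp']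
  congr 1
  have h1 := two_mul_tri (a + b)
  have h2 := two_mul_tri (a - b)
  linarith

lemma gs_odd {p : ℝ} (hp : 0 < p) (a b : ℤ) :
    gs p (a + b) * gs p (a - b + 1) = gs (p ^ 2) a * gs (p ^ 2) b * (p : ℂ) ^ a := by
  have hp' : (p : ℂ) ≠ 0 := by exact_mod_cast hp.ne'
  rw [gs_succ hp, ← mul_assoc, gs_even hp, mul_assoc, ← zpow_add₀ hp']
  simp

noncomputable def tA (p : ℝ) (x : ℂ) : ℂ := ∑' n : ℤ, gs (p ^ 2) n * (x ^ 2) ^ n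

noncomputable def tB (p : ℝ) (x : ℂ) : ℂ := x * ∑' n : ℤ, gs (p ^ 2) n * (p * x ^ 2) ^ n

lemma gs_norm0 {p : ℝ} (hp : 0 < p) (hp1 : p < 1) (z : ℂ) (hz : z ≠ 0) :
    Summable (fun n : ℤ => ‖gs p n * z ^ n‖) := by
  simpa using gs_norm_summable hp hp1 z hz 0

lemma theta_split1 {p : ℝ} (hp : 0 < p) (hp1 : p < 1) {x y : ℂ} (hx : x ≠ 0) (hy : y ≠ 0) :
    x * th p 0 (x * y) * th p 0 (y / x) = tA p y * tB p x - tB p y * tA p x := by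
  have hp' : (p : ℂ) ≠ 0 := by exact_mod_cast hp.ne'
  have hq : 0 < p ^ 2 := by positivity
  have hq1 : p ^ 2 < 1 := pow_lt_one₀ hp.le hp1 (by norm_num)
  have hX : -x ≠ 0 := neg_ne_zero.mpr hx
  have e1 : -(x * y) = (-x) * y := by ring
  have e2 : -(y / x) = y / (-x) := by field_simp
  have key := tsum_mul_parity
    (f := fun n => gs p n * (-(x * y)) ^ n) (g := fun n => gs p n * (-(y / x)) ^ n)
    (u := fun n => gs (p ^ 2) n * (y ^ 2) ^ n) (v := fun n => gs (p ^ 2) n * (p * x ^ 2) ^ n)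
    (u' := fun n => gs (p ^ 2) n * (p * y ^ 2) ^ n) (v' := fun n => (- y / x) * (gs (p ^ 2) n * (x ^ 2) ^ n))
    (gs_norm0 hp hp1 _ (neg_ne_zero.mpr (mul_ne_zero hx hy)))
    (gs_norm0 hp hp1 _ (neg_ne_zero.mpr (div_ne_zero hy hx)))
    (gs_norm0 hq hq1 _ (pow_ne_zero _ hy))
    (gs_norm0 hq hq1 _ (mul_ne_zero hp' (pow_ne_zero _ hx)))
    (gs_norm0 hq hq1 _ (mul_ne_zero hp' (pow_ne_zero _ hy)))
    (by simp only [norm_mul (- y / x)]; exact (gs_norm0 hq hq1 _ (pow_ne_zero _ hx)).mul_left _)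
    (by
      intro a b
      have g := gs_even hp a b
      have hz : (-(x * y)) ^ (a + b) * (-(y / x)) ^ (a - b) = (y ^ 2) ^ a * (x ^ 2) ^ b := by
        rw [e1, e2, ← neg_sq x, mul_zpow, div_zpow, zpow_add₀ hX, zpow_add₀ hy, zpow_sub₀ hX,
          zpow_sub₀ hy, sq, sq, mul_zpow, mul_zpow]
        have := zpow_ne_zero a hX
        have := zpow_ne_zero b hX
        have := zpow_ne_zero a hy
        have := zpow_ne_zero b hy
        field_simp
      calc _ = (gs p (a + b) * gs p (a - b)) * ((-(x * y)) ^ (a + b) * (-(y / x)) ^ (a - b)) := by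
            ring
        _ = _ := by rw [g, hz, mul_zpow]; ring)
    (by
      intro a b
      have g := gs_odd hp a b
      have hz : (-(x * y)) ^ (a + b) * (-(y / x)) ^ (a - b + 1)
          = (y ^ 2) ^ a * (x ^ 2) ^ b * (- y / x) := by
        have e3 : - y / x = y / (-x) := by field_simp
        rw [e1, e2, e3, ← neg_sq x, zpow_add_one₀ (div_ne_zero hy hX), mul_zpow, div_zpow,
          zpow_add₀ hX, zpow_add₀ hy, zpow_sub₀ hX,
          zpow_sub₀ hy, sq, sq, mul_zpow, mul_zpow]
        have := zpow_ne_zero a hX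
        have := zpow_ne_zero b hX
        have := zpow_ne_zero a hy
        have := zpow_ne_zero b hy
        field_simp
      calc _ = (gs p (a + b) * gs p (a - b + 1)) *
              ((-(x * y)) ^ (a + b) * (-(y / x)) ^ (a - b + 1)) := by
            ring
        _ = _ := by rw [g, hz, mul_zpow]; ring)
  rw [tsum_mul_left] at key
  unfold th tA tB
  simp only [pow_zero, one_mul]
  rw [mul_assoc, key]
  field_simp
  ring

noncomputable def cA (p : ℝ) : ℂ := ∑' n : ℤ, (-4) * ((n : ℂ) ^ 2 * (gs (p ^ 2) n * (p : ℂ) ^ n))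

noncomputable def cB (p : ℝ) : ℂ := ∑' n : ℤ, (2 * (n : ℂ) - 1) ^ 2 * gs (p ^ 2) n

lemma theta_split2 {p : ℝ} (hp : 0 < p) (hp1 : p < 1) {x : ℂ} (hx : x ≠ 0) :
    2 * (th p 1 x ^ 2 - th p 0 x * th p 2 x) = tA p x * cA p + tB p x * cB p := by
  have hp' : (p : ℂ) ≠ 0 := by exact_mod_cast hp.ne'
  have hq : 0 < p ^ 2 := by positivity
  have hq1 : p ^ 2 < 1 := pow_lt_one₀ hp.le hp1 (by norm_num)
  have hX : -x ≠ 0 := neg_ne_zero.mpr hx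
  have s := gs_norm_summable hp hp1 (-x) hX
  have m11 := (summable_mul_of_summable_norm (s 1) (s 1)).hasSum
  have m02 := (summable_mul_of_summable_norm (s 0) (s 2)).hasSum
  have m20 := (summable_mul_of_summable_norm (s 2) (s 0)).hasSum
  rw [← tsum_mul_tsum_of_summable_norm (s 1) (s 1)] at m11
  rw [← tsum_mul_tsum_of_summable_norm (s 0) (s 2)] at m02
  rw [← tsum_mul_tsum_of_summable_norm (s 2) (s 0)] at m20
  have hF := ((m11.mul_left 2).sub m02).sub m20
  have hpar := tsum_parity hF.summable
  rw [hF.tsum_eq] at hpar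
  have ev : ∀ a : ℤ × ℤ, (-4 * (a.2 : ℂ) ^ 2) * (gs p (a.1 + a.2) * gs p (a.1 - a.2)) *
          ((-x) ^ (a.1 + a.2) * (-x) ^ (a.1 - a.2)) = (gs (p ^ 2) a.1 * (x ^ 2) ^ a.1) *
      ((-4) * ((a.2 : ℂ) ^ 2 * (gs (p ^ 2) a.2 * (p : ℂ) ^ a.2))) := fun a => by
    have g := gs_even hp a.1 a.2
    have hz : (-x) ^ (a.1 + a.2) * (-x) ^ (a.1 - a.2) = (x ^ 2) ^ a.1 := by
      rw [← zpow_add₀ hX, ← neg_sq x, ← zpow_natCast, ← zpow_mul]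
      congr 1
      push_cast
      ring
    rw [g, hz]
    ring
  have od : ∀ a : ℤ × ℤ, (-(2 * (a.2 : ℂ) - 1) ^ 2) * (gs p (a.1 + a.2) * gs p (a.1 - a.2 + 1)) *
          ((-x) ^ (a.1 + a.2) * (-x) ^ (a.1 - a.2 + 1)) = (gs (p ^ 2) a.1 * (p * x ^ 2) ^ a.1) *
      (x * ((2 * (a.2 : ℂ) - 1) ^ 2 * gs (p ^ 2) a.2)) := fun a => by
    have g := gs_odd hp a.1 a.2
    have hz : (-x) ^ (a.1 + a.2) * (-x) ^ (a.1 - a.2 + 1) = (x ^ 2) ^ a.1 * (-x) := by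
      rw [← zpow_add₀ hX, ← neg_sq x, ← zpow_natCast, ← zpow_mul, ← zpow_add_one₀ hX]
      congr 1
      push_cast
      ring
    rw [g, hz, mul_zpow]
    ring
  have sB : Summable fun n : ℤ => ‖x * ((2 * (n : ℂ) - 1) ^ 2 * gs (p ^ 2) n)‖ := by
    have t := gs_summable hq hq1 1 one_ne_zero
    have := ((((t 2).mul_left 4).sub ((t 1).mul_left 4)).add (t 0)).mul_left x
    refine (this.congr fun n => ?_).norm
    simp only [one_zpow, pow_zero, pow_one]
    ring
  have sA : Summable fun n : ℤ => ‖(-4 : ℂ) * ((n : ℂ) ^ 2 * (gs (p ^ 2) n * (p : ℂ) ^ n))‖ :=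
    ((gs_summable hq hq1 p hp' 2).mul_left _).norm
  have q1 := tsum_mul_tsum_of_summable_norm (gs_norm0 hq hq1 _ (pow_ne_zero 2 hx)) sA
  have q2 := tsum_mul_tsum_of_summable_norm
    (gs_norm0 hq hq1 _ (mul_ne_zero hp' (pow_ne_zero 2 hx))) sB
  have r1 : tA p x * cA p = ∑' a : ℤ × ℤ, (gs (p ^ 2) a.1 * (x ^ 2) ^ a.1) *
      ((-4) * ((a.2 : ℂ) ^ 2 * (gs (p ^ 2) a.2 * (p : ℂ) ^ a.2))) := q1
  have r2 : tB p x * cB p = ∑' a : ℤ × ℤ, (gs (p ^ 2) a.1 * (p * x ^ 2) ^ a.1) *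
      (x * ((2 * (a.2 : ℂ) - 1) ^ 2 * gs (p ^ 2) a.2)) := by
    refine Eq.trans ?_ q2
    rw [tsum_mul_left]
    unfold tB cB
    ring
  rw [r1, r2, ← tsum_congr ev, ← tsum_congr od]
  refine Eq.trans ?_ (hpar.trans ?_)
  · unfold th
    ring
  · congr 1
    · refine tsum_congr fun a => ?_
      push_cast
      ring
    · refine tsum_congr fun a => ?_
      push_cast
      ring


theorem stmt16 (q : ℝ) (hq0 : 0 < q) (hq1 : q < 1) (x y : ℂ) (hx : x ≠ 0) (hy : y ≠ 0)
    (hxn : ∀ n : ℤ, x * (q : ℂ) ^ (10 * n) ≠ 1) (hyn : ∀ n : ℤ, y * (q : ℂ) ^ (10 * n) ≠ 1) :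
    (∑' n : ℤ, (x * (q : ℂ) ^ (10 * n) / (1 - x * (q : ℂ) ^ (10 * n)) ^ 2
          - y * (q : ℂ) ^ (10 * n) / (1 - y * (q : ℂ) ^ (10 * n)) ^ 2))
        * ramTheta (-x) (-((q : ℂ) ^ 10 / x)) ^ 2 * ramTheta (-y) (-((q : ℂ) ^ 10 / y)) ^ 2
      = x * ramTheta (-(x * y)) (-((q : ℂ) ^ 10 / (x * y)))
          * ramTheta (-(y / x)) (-(x * (q : ℂ) ^ 10 / y))
          * (qPochInf ((q : ℂ) ^ 10) ((q : ℂ) ^ 10)) ^ 6 := by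
  set p : ℝ := q ^ 10 with hpdef
  have hp : 0 < p := by positivity
  have hp1 : p < 1 := pow_lt_one₀ hq0.le hq1 (by norm_num)
  have e1 : ∀ n : ℤ, (q : ℂ) ^ (10 * n) = (p : ℂ) ^ n := by
    intro n
    rw [zpow_mul, hpdef]
    push_cast
    congr 1
  have e2 : (q : ℂ) ^ 10 = (p : ℂ) := by rw [hpdef]; push_cast; rfl
  simp only [e1] at hxn hyn ⊢
  rw [e2]
  have e3 : x * (p : ℂ) / y = (p : ℂ) / (y / x) := by field_simp
  rw [e3, ramTheta_eq hp x hx, ramTheta_eq hp y hy, ramTheta_eq hp (x * y) (mul_ne_zero hx hy),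
    ramTheta_eq hp (y / x) (div_ne_zero hy hx), qPochInf_eq hp hp1]
  have sx : Summable (gg p x) := by
    obtain ⟨s1, s2⟩ := gg_parts hp hp1 hx
    exact Summable.of_nat_of_neg_add_one s1 s2
  have sy : Summable (gg p y) := by
    obtain ⟨s1, s2⟩ := gg_parts hp hp1 hy
    exact Summable.of_nat_of_neg_add_one s1 s2
  have e4 := sx.tsum_sub sy
  simp only [gg] at e4
  rw [e4]
  have px := theta_P hp hp1 hx hxn
  have py := theta_P hp hp1 hy hyn
  simp only [gg] at px py
  have sx2 := theta_split2 hp hp1 hx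
  have sy2 := theta_split2 hp hp1 hy
  rw [px] at sx2
  rw [py] at sy2
  have h1 := theta_split2 hp hp1 (x := 1) one_ne_zero
  rw [th_zero_one hp hp1, th_one_one hp hp1] at h1
  have r := theta_split1 hp hp1 hx hy
  have ry := theta_split1 hp hp1 one_ne_zero hy
  have rx := theta_split1 hp hp1 one_ne_zero hx
  simp only [one_mul, div_one] at rx ry
  rw [r]
  linear_combination (1 / 2 : ℂ) * (th p 0 y ^ 2 * sx2 - th p 0 x ^ 2 * sy2
    + (tA p x * cA p + tB p x * cB p) * ry - (tA p y * cA p + tB p y * cB p) * rx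
    - (tA p y * tB p x - tB p y * tA p x) * h1)
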